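/- Let 𝒜 be a NMAD-family on ℕ that contains a countable subfamily {Aₙ : n ∈ ℕ} ⊆ 𝒜 which is a partition of ℕ. Then S_𝒫 ≤_RK S_𝒜 for every partition 𝒫 of ℕ into infinitely many infinite sets. -/

import Mathlib

/-!
Any injective sequence `A n` of members of an AD-family `𝒜` on a countable set becomes a partition
after finitely many points are changed in each `A n`: remove from `A n` the earlier sets and add at
most one of the points not covered by the sequence. Map the `n`-th piece onto the `n`-th piece of
`𝒬` with infinite fibres, calling the resulting map `f`. Both `X ∈ I(𝒬)` and `f ⁻¹' X ∈ I(𝒜)` then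
say that `X` meets only finitely many pieces of `𝒬`. For `f ⁻¹' X` this is because a set in `I(𝒜)`
has infinite intersection with only finitely many members of `𝒜`, whereas `f ⁻¹' X` contains an
infinite subset of the `n`-th piece as soon as `X` meets the `n`-th piece of `𝒬`.
-/


open Set

/-- `f[G] = {A : f⁻¹(A) ∈ G}`, the image (Rudin–Keisler) filter of a family of sets. -/
def mapFilter {α β : Type*} (f : α → β) (G : Set (Set α)) : Set (Set β) := {A | f ⁻¹' A ∈ G}

/-- `F` is a (proper) filter of subsets. -/
def IsFilterFam {α : Type*} (F : Set (Set α)) : Prop :=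
  Set.univ ∈ F ∧ (∀ A ∈ F, ∀ B : Set α, A ⊆ B → B ∈ F) ∧ (∀ A ∈ F, ∀ B ∈ F, A ∩ B ∈ F)

/-- A free filter: a proper filter containing all cofinite sets. -/
def IsFreeFilter {α : Type*} (F : Set (Set α)) : Prop :=
  IsFilterFam F ∧ (∀ A : Set α, Aᶜ.Finite → A ∈ F) ∧ ∅ ∉ F

/-- `S → F` : `S` is an infinite set converging to the filter `F`, i.e. `S ⊆* A` for all `A ∈ F`. -/
def ConvTo {α : Type*} (S : Set α) (F : Set (Set α)) : Prop :=
  S.Infinite ∧ ∀ A ∈ F, (S \ A).Finite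

/-- `F` is relatively equivalent to the Fréchet filter: some `A ∈ F` converges to `F`. -/
def RelFrechet {α : Type*} (F : Set (Set α)) : Prop := ∃ A ∈ F, ConvTo A F

/-- Rudin–Keisler order: `F ≤_RK G` iff `f[G] = F` for some surjection `f`. -/
def RKle {α : Type*} (F G : Set (Set α)) : Prop :=
  ∃ f : α → α, Function.Surjective f ∧ mapFilter f G = F

/-- `F ≈ G` : there is a bijection `f` with `f[F] = G`. -/
def EquivFilter {α : Type*} (F G : Set (Set α)) : Prop :=
  ∃ f : α → α, Function.Bijective f ∧ mapFilter f F = G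

/-- `F <_RK G` : `F ≤_RK G` and `¬ (F ≈ G)`. -/
def RKlt {α : Type*} (F G : Set (Set α)) : Prop := RKle F G ∧ ¬ EquivFilter F G

/-- An AD-family: an infinite family of infinite sets with pairwise finite intersections. -/
def IsADFamily {α : Type*} (𝒜 : Set (Set α)) : Prop :=
  𝒜.Infinite ∧ (∀ A ∈ 𝒜, A.Infinite) ∧ ∀ A ∈ 𝒜, ∀ B ∈ 𝒜, A ≠ B → (A ∩ B).Finite

/-- The ideal generated by a family `𝒜`: sets almost covered by finitely many members of `𝒜`. -/
def idealGen {α : Type*} (𝒜 : Set (Set α)) : Set (Set α) :=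
  {X | ∃ 𝒜' : Finset (Set α), ↑𝒜' ⊆ 𝒜 ∧ (X \ ⋃₀ ↑𝒜').Finite}

/-- `S_𝒜`: the filter dual to the ideal generated by `𝒜`. -/
def SFam {α : Type*} (𝒜 : Set (Set α)) : Set (Set α) := {F | Fᶜ ∈ idealGen 𝒜}

/-- `F_𝒟 = {F : D ⊆* F for every D ∈ 𝒟}`. -/
def FFam {α : Type*} (𝒟 : Set (Set α)) : Set (Set α) := {F | ∀ D ∈ 𝒟, (D \ F).Finite}

/-- A nowhere MAD family: every set outside the generated ideal contains an infinite set
almost disjoint from every member of `𝒜`. -/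
def IsNMAD {α : Type*} (𝒜 : Set (Set α)) : Prop :=
  IsADFamily 𝒜 ∧ ∀ X : Set α, X ∉ idealGen 𝒜 →
    ∃ B ⊆ X, B.Infinite ∧ ∀ A ∈ 𝒜, (B ∩ A).Finite

/-- A partition of `ℕ` into infinitely many infinite sets. -/
def IsInfPartition (𝒬 : Set (Set ℕ)) : Prop :=
  𝒬.Infinite ∧ (∀ P ∈ 𝒬, P.Infinite) ∧ ⋃₀ 𝒬 = Set.univ ∧
    ∀ P ∈ 𝒬, ∀ Q ∈ 𝒬, P ≠ Q → P ∩ Q = ∅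

/-- `F` is a Fréchet–Urysohn filter: every `F`-positive set contains a sequence converging to `F`. -/
def IsFUFilter {α : Type*} (F : Set (Set α)) : Prop :=
  ∀ A : Set α, Aᶜ ∉ F → ∃ S ⊆ A, ConvTo S F

/-- The trace filter `F|_A = {G ∩ A : G ∈ F}`. -/
def traceFam {α : Type*} (F : Set (Set α)) (A : Set α) : Set (Set α) := {S | ∃ G ∈ F, S = G ∩ A}

/-- Todorčević–Uzcátegui order: there are `A ∈ G⁺`, `B ∈ F` and a bijection `f : A → B`
with `f[G|_A] = F|_B`. -/
def TUle {α : Type*} (F G : Set (Set α)) : Prop :=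
  ∃ A : Set α, Aᶜ ∉ G ∧ ∃ B ∈ F, ∃ f : α → α, Set.BijOn f A B ∧
    {Y : Set α | Y ⊆ B ∧ A ∩ f ⁻¹' Y ∈ traceFam G A} = traceFam F B

variable {α β ι : Type*}

theorem mem_idealGen_iff_exists_finite {𝒜 : Set (Set α)} {X : Set α} :
    X ∈ idealGen 𝒜 ↔ ∃ ℱ ⊆ 𝒜, ℱ.Finite ∧ (X \ ⋃₀ ℱ).Finite := by
  constructor
  · rintro ⟨F, hF𝒜, hXF⟩
    exact ⟨F, hF𝒜, F.finite_toSet, hXF⟩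
  · rintro ⟨ℱ, hℱ𝒜, hℱ, hXℱ⟩
    lift ℱ to Finset (Set α) using hℱ
    exact ⟨ℱ, hℱ𝒜, hXℱ⟩

theorem finite_setOf_infinite_inter_of_mem_idealGen {𝒜 : Set (Set α)}
    (h𝒜 : 𝒜.Pairwise fun A B => (A ∩ B).Finite) {X : Set α} (hX : X ∈ idealGen 𝒜) :
    {A ∈ 𝒜 | (A ∩ X).Infinite}.Finite := by
  obtain ⟨ℱ, hℱ𝒜, hℱ, hXℱ⟩ := mem_idealGen_iff_exists_finite.1 hX
  refine hℱ.subset fun A ⟨hA, hAX⟩ => by_contra fun hAℱ => hAX ?_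
  have hAB : (⋃ B ∈ ℱ, A ∩ B).Finite :=
    hℱ.biUnion fun B hB => h𝒜 hA (hℱ𝒜 hB) (ne_of_mem_of_not_mem hB hAℱ).symm
  refine (hXℱ.union hAB).subset fun x ⟨hxA, hxX⟩ => ?_
  by_cases hx : x ∈ ⋃₀ ℱ
  · obtain ⟨B, hB, hxB⟩ := hx
    exact Or.inr (mem_biUnion hB ⟨hxA, hxB⟩)
  · exact Or.inl ⟨hxX, hx⟩

theorem mem_idealGen_range_fiber_iff {p : β → ι} {X : Set β} :
    X ∈ idealGen (range fun i => p ⁻¹' {i}) ↔ (p '' X).Finite := by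
  rw [mem_idealGen_iff_exists_finite]
  constructor
  · rintro ⟨ℱ, hℱ, hℱfin, hXℱ⟩
    have image_sUnion_finite : (p '' ⋃₀ ℱ).Finite := by
      rw [image_sUnion]
      refine (hℱfin.image _).sUnion ?_
      rintro _ ⟨P, hP, rfl⟩
      obtain ⟨i, rfl⟩ := hℱ hP
      exact (finite_singleton i).subset (image_preimage_subset p {i})
    refine ((hXℱ.image p).union image_sUnion_finite).subset ?_
    rw [← image_union, sdiff_union_self]
    exact image_mono subset_union_left
  · intro hX
    refine ⟨(fun i => p ⁻¹' {i}) '' (p '' X), image_subset_range _ _, hX.image _, ?_⟩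
    have X_subset : X ⊆ ⋃₀ ((fun i => p ⁻¹' {i}) '' (p '' X)) := fun x hx =>
      ⟨p ⁻¹' {p x}, mem_image_of_mem _ (mem_image_of_mem p hx), rfl⟩
    simp only [sdiff_eq_empty.2 X_subset, finite_empty]

theorem preimage_mem_idealGen_iff {𝒜 : Set (Set α)} (h𝒜 : 𝒜.Pairwise fun A B => (A ∩ B).Finite)
    {A : ι → Set α} (hA : ∀ i, A i ∈ 𝒜) (A_inj : A.Injective) {f : α → β} {p : β → ι}
    (fiber_diff : ∀ i, ((p ∘ f) ⁻¹' {i} \ A i).Finite) (fiber_inf : ∀ b, (f ⁻¹' {b}).Infinite)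
    {X : Set β} : f ⁻¹' X ∈ idealGen 𝒜 ↔ (p '' X).Finite := by
  constructor
  · intro hX
    have finite_indices : {i | (A i ∩ f ⁻¹' X).Infinite}.Finite :=
      ((finite_setOf_infinite_inter_of_mem_idealGen h𝒜 hX).preimage A_inj.injOn).subset
        fun i hi => ⟨hA i, hi⟩
    refine finite_indices.subset ?_
    rintro _ ⟨b, hb, rfl⟩
    refine ((fiber_inf b).sdiff (fiber_diff (p b))).mono ?_
    rintro x ⟨rfl, hx⟩
    exact ⟨by_contra fun hxA => hx ⟨rfl, hxA⟩, hb⟩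
  · intro hX
    refine mem_idealGen_iff_exists_finite.2
      ⟨A '' (p '' X), image_subset_iff.2 fun i _ => hA i, hX.image A, ?_⟩
    refine (hX.biUnion fun i _ => fiber_diff i).subset fun x ⟨hxX, hxA⟩ => ?_
    have hpx : p (f x) ∈ p '' X := mem_image_of_mem p hxX
    exact mem_biUnion hpx ⟨rfl, fun hx => hxA ⟨_, mem_image_of_mem A hpx, hx⟩⟩

theorem exists_fiber_almost_eq [Countable α] {A : ℕ → Set α}
    (hA : Pairwise fun m n => (A m ∩ A n).Finite) :
    ∃ k : α → ℕ, ∀ n, (k ⁻¹' {n} \ A n).Finite ∧ (A n \ k ⁻¹' {n}).Finite := by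
  classical
  obtain ⟨c, hc⟩ := exists_injective_nat α
  have fiber_finite (n : ℕ) : (c ⁻¹' {n}).Finite := (finite_singleton n).preimage hc.injOn
  -- Adding the point with code `n` to `A n` makes the sequence cover `α`.
  have covered (x : α) : ∃ n, x ∈ A n ∪ c ⁻¹' {n} := ⟨c x, Or.inr rfl⟩
  refine ⟨fun x => Nat.find (covered x), fun n => ⟨(fiber_finite n).subset ?_, ?_⟩⟩
  · rintro x ⟨rfl, hx⟩
    exact (Nat.find_spec (covered x)).resolve_left hx
  · have inter_earlier_finite : (⋃ m ∈ Iio n, A n ∩ (A m ∪ c ⁻¹' {m})).Finite :=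
      (finite_Iio n).biUnion fun m hm => by
        rw [inter_union_distrib_left]
        exact (hA (ne_of_gt hm)).union ((fiber_finite m).inter_of_right _)
    refine inter_earlier_finite.subset fun x ⟨hxA, hx⟩ => ?_
    have hlt : Nat.find (covered x) < n := (Nat.find_min' (covered x) (Or.inl hxA)).lt_of_ne hx
    exact mem_biUnion hlt ⟨hxA, Nat.find_spec (covered x)⟩

theorem exists_forall_infinite_fiber (α β : Type*) [Infinite α] [Countable β] [Nonempty β] :
    ∃ f : α → β, ∀ b, (f ⁻¹' {b}).Infinite := by
  obtain ⟨c, hc⟩ := exists_injective_nat (β × ℕ)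
  have e_inj : (Infinite.natEmbedding α ∘ c).Injective :=
    (Infinite.natEmbedding α).injective.comp hc
  obtain ⟨r, hr⟩ := e_inj.hasLeftInverse
  refine ⟨Prod.fst ∘ r, fun b => ?_⟩
  refine (infinite_range_of_injective (e_inj.comp (Prod.mk_right_injective b))).mono ?_
  rintro _ ⟨k, rfl⟩
  exact congrArg Prod.fst (hr (b, k))

theorem exists_lift_forall_infinite_fiber [Countable β] {k : α → ι} {p : β → ι}
    (hk : ∀ i, (k ⁻¹' {i}).Infinite) (hp : p.Surjective) :
    ∃ f : α → β, p ∘ f = k ∧ ∀ b, (f ⁻¹' {b}).Infinite := by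
  have exists_map_fiber (i : ι) : ∃ g : k ⁻¹' {i} → p ⁻¹' {i}, ∀ b, (g ⁻¹' {b}).Infinite := by
    have : Infinite (k ⁻¹' {i}) := (hk i).to_subtype
    have : Nonempty (p ⁻¹' {i}) := nonempty_subtype.2 (hp i)
    exact exists_forall_infinite_fiber _ _
  choose g hg using exists_map_fiber
  refine ⟨fun x => g (k x) ⟨x, rfl⟩, funext fun x => (g (k x) ⟨x, rfl⟩).2, fun b => ?_⟩
  obtain ⟨i, hi⟩ : ∃ i, p b = i := ⟨_, rfl⟩
  refine ((hg i ⟨b, hi⟩).image Subtype.val_injective.injOn).mono ?_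
  rintro _ ⟨⟨x, rfl⟩, hgx, rfl⟩
  exact congrArg Subtype.val hgx

theorem IsInfPartition.exists_eq_range_fiber {𝒬 : Set (Set ℕ)} (h𝒬 : IsInfPartition 𝒬) :
    ∃ p : ℕ → ℕ, p.Surjective ∧ 𝒬 = range fun n => p ⁻¹' {n} := by
  obtain ⟨𝒬_inf, piece_inf, 𝒬_cover, 𝒬_disj⟩ := h𝒬
  have exists_piece (x : ℕ) : ∃ P : 𝒬, x ∈ P.1 := by
    obtain ⟨P, hP, hx⟩ := 𝒬_cover.ge (mem_univ x)
    exact ⟨⟨P, hP⟩, hx⟩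
  choose piece mem_piece using exists_piece
  have piece_eq_iff {x : ℕ} {P : 𝒬} : piece x = P ↔ x ∈ P.1 := by
    refine ⟨fun h => h ▸ mem_piece x, fun hx => by_contra fun hne => ?_⟩
    exact (𝒬_disj _ (piece x).2 P P.2 (Subtype.coe_ne_coe.2 hne)).le ⟨mem_piece x, hx⟩
  have piece_surj : piece.Surjective := fun P =>
    (piece_inf P P.2).nonempty.imp fun _ => piece_eq_iff.2
  have : Infinite 𝒬 := 𝒬_inf.to_subtype
  have : Countable 𝒬 := piece_surj.countable
  obtain ⟨e⟩ := nonempty_equiv_of_countable (α := 𝒬) (β := ℕ)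
  have fiber_eq (n : ℕ) : (e ∘ piece) ⁻¹' {n} = (e.symm n).1 := by
    ext x
    exact e.eq_symm_apply.symm.trans piece_eq_iff
  refine ⟨e ∘ piece, e.surjective.comp piece_surj, ?_⟩
  simp only [fiber_eq]
  exact Subtype.range_val.symm.trans (e.symm.surjective.range_comp Subtype.val).symm

theorem statement10_general {𝒜 𝒬 : Set (Set ℕ)} (h𝒜 : IsADFamily 𝒜) (h𝒬 : IsInfPartition 𝒬) :
    RKle (SFam 𝒬) (SFam 𝒜) := by
  obtain ⟨𝒜_inf, mem_inf, inter_fin⟩ := h𝒜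
  let A := 𝒜_inf.natEmbedding
  have A_inj : (fun n => (A n).1).Injective := Subtype.val_injective.comp A.injective
  obtain ⟨k, hk⟩ := exists_fiber_almost_eq (A := fun n => (A n).1) fun m n hmn =>
    inter_fin _ (A m).2 _ (A n).2 (A_inj.ne hmn)
  have k_fiber_inf (n : ℕ) : (k ⁻¹' {n}).Infinite := fun hfin =>
    mem_inf _ (A n).2 ((hk n).2.of_sdiff hfin)
  obtain ⟨p, p_surj, rfl⟩ := h𝒬.exists_eq_range_fiber
  obtain ⟨f, rfl, f_fiber_inf⟩ := exists_lift_forall_infinite_fiber k_fiber_inf p_surj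
  refine ⟨f, fun b => (f_fiber_inf b).nonempty, Set.ext fun X => ?_⟩
  change f ⁻¹' Xᶜ ∈ idealGen 𝒜 ↔ Xᶜ ∈ idealGen _
  rw [mem_idealGen_range_fiber_iff]
  exact preimage_mem_idealGen_iff (fun B hB C hC => inter_fin B hB C hC) (fun n => (A n).2) A_inj
    (fun n => (hk n).1) f_fiber_inf

/-- If a NMAD family `𝒜` contains a countable subfamily which is a partition of `ℕ`, then
`S_𝒬 ≤_RK S_𝒜` for every partition `𝒬` of `ℕ` into infinitely many infinite sets. -/
theorem statement10 (𝒜 : Set (Set ℕ)) (h𝒜 : IsNMAD 𝒜)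
    (A : ℕ → Set ℕ) (hmem : ∀ n, A n ∈ 𝒜) (hinj : Function.Injective A)
    (hdisj : ∀ m n : ℕ, m ≠ n → A m ∩ A n = ∅) (hcov : (⋃ n, A n) = Set.univ) :
    ∀ 𝒬 : Set (Set ℕ), IsInfPartition 𝒬 → RKle (SFam 𝒬) (SFam 𝒜) :=
  fun _ => statement10_general h𝒜.1
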